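/- (Proposition 4.1.) Let F be the logistic function, θ ∈ ℝ, δ_1,…,δ_k ∈ ℝ. Let μ̃ be the product probability measure on {0,1}^k under which the coordinates are independent Bernoulli variables with μ̃(Ỹ^{(r)} = 1) = F(θ − δ_r) for r = 1,…,k. The Guttman space Ω^G has positive μ̃-probability, and if μ denotes μ̃ conditioned on Ω^G, then the coordinate sum Y = Y^{(1)} + … + Y^{(k)} under μ follows the partial credit model with parameters θ, δ_1,…,δ_k, i.e., μ(Y = r) = exp(∑_{l=1}^r (θ − δ_l)) / ∑_{s=0}^k exp(∑_{l=1}^s (θ − δ_l)) for all r = 0,…,k. -/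

import Mathlib

open scoped Classical

/-- The logistic function `F(x) = exp x / (1 + exp x)`. -/
noncomputable def logistic (x : ℝ) : ℝ := Real.exp x / (1 + Real.exp x)

/-- A vector in `{0,1}^k` is a Guttman vector if its coordinates are nonincreasing,
i.e. it has the form `(1,…,1,0,…,0)`. -/
def IsGuttman {k : ℕ} (y : Fin k → Bool) : Prop :=
  ∀ i j : Fin k, i ≤ j → y j = true → y i = true

/-- The sum `Y = Y⁽¹⁾ + … + Y⁽ᵏ⁾` of the binary coordinates. -/
def gsum {k : ℕ} (y : Fin k → Bool) : ℕ :=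
  ∑ i : Fin k, if y i then 1 else 0

/-- The product (independent Bernoulli) probability mass function on `{0,1}^k`
with success probabilities `F(θ - δ r)`, `r = 1,…,k` (coordinate `i` is `r = i+1`). -/
noncomputable def prodBer (k : ℕ) (θ : ℝ) (δ : ℕ → ℝ) (y : Fin k → Bool) : ℝ :=
  ∏ i : Fin k,
    if y i then logistic (θ - δ ((i : ℕ) + 1)) else 1 - logistic (θ - δ ((i : ℕ) + 1))

/-- The probability mass function of the partial credit model (PCM). -/
noncomputable def pcmPMF (k : ℕ) (θ : ℝ) (δ : ℕ → ℝ) (r : ℕ) : ℝ :=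
  Real.exp (∑ l ∈ Finset.Icc 1 r, (θ - δ l)) /
    ∑ s ∈ Finset.range (k + 1), Real.exp (∑ l ∈ Finset.Icc 1 s, (θ - δ l))

/-!
Since `F(x) = (1 - F(x)) exp x`, switching coordinate `r` from `0` to `1` multiplies the probability
of a vector by `exp(θ - δ r)`. There is exactly one Guttman vector with sum `r`, namely `r` ones
followed by zeros, so its probability is `exp(∑_{l ≤ r} (θ - δ l))` times that of the zero vector.
The common factor cancels in the conditional probability.
-/

open Finset

/-- The Guttman vector `(1,…,1,0,…,0)` of length `k` with `r` leading ones, all ones if `r ≥ k`. -/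
def guttmanVec (k r : ℕ) : Fin k → Bool := fun i ↦ decide ((i : ℕ) < r)

section Guttman

variable {k r : ℕ} {y : Fin k → Bool}

lemma gsum_eq_card_filter (y : Fin k → Bool) : gsum y = #{i | y i = true} :=
  (card_filter _ _).symm

lemma gsum_le (y : Fin k → Bool) : gsum y ≤ k := by
  simpa [gsum_eq_card_filter] using card_le_univ {i | y i = true}

lemma isGuttman_guttmanVec (k r : ℕ) : IsGuttman (guttmanVec k r) := by
  intro i j hij hj
  simp only [guttmanVec, decide_eq_true_eq] at hj ⊢
  exact lt_of_le_of_lt hij hj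

lemma gsum_guttmanVec (hr : r ≤ k) : gsum (guttmanVec k r) = r := by
  simp [gsum_eq_card_filter, guttmanVec, Fin.card_filter_val_lt, hr]

lemma IsGuttman.lt_gsum_iff (hy : IsGuttman y) (i : Fin k) : i < gsum y ↔ y i = true := by
  rw [gsum_eq_card_filter]
  exact Fin.lt_card_filter_univ_iff_apply_of_imp (y · = true) fun i j hji hi ↦ hy j i hji hi

lemma IsGuttman.guttmanVec_gsum (hy : IsGuttman y) : guttmanVec k (gsum y) = y := by
  funext i
  simp [guttmanVec, hy.lt_gsum_iff]

lemma isGuttman_and_gsum_eq_iff (hr : r ≤ k) :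
    IsGuttman y ∧ gsum y = r ↔ y = guttmanVec k r := by
  constructor
  · rintro ⟨hy, rfl⟩
    exact hy.guttmanVec_gsum.symm
  · rintro rfl
    exact ⟨isGuttman_guttmanVec k r, gsum_guttmanVec hr⟩

variable {M : Type*} [AddCommMonoid M]

lemma sum_isGuttman_and_gsum_eq (f : (Fin k → Bool) → M) (hr : r ≤ k) :
    ∑ y with IsGuttman y ∧ gsum y = r, f y = f (guttmanVec k r) := by
  simp [isGuttman_and_gsum_eq_iff hr, filter_eq']

lemma sum_isGuttman (f : (Fin k → Bool) → M) :
    ∑ y with IsGuttman y, f y = ∑ r ∈ range (k + 1), f (guttmanVec k r) := by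
  have gsum_mem : ∀ y ∈ ({y | IsGuttman y} : Finset (Fin k → Bool)), gsum y ∈ range (k + 1) :=
    fun y _ ↦ mem_range_succ_iff.mpr (gsum_le y)
  rw [← sum_fiberwise_of_maps_to gsum_mem]
  refine sum_congr rfl fun r hr ↦ ?_
  rw [filter_filter, sum_isGuttman_and_gsum_eq f (mem_range_succ_iff.mp hr)]

lemma sum_fin_val_lt_eq_sum_Icc_one (f : ℕ → M) (hr : r ≤ k) :
    ∑ i : Fin k with i.val < r, f (i.val + 1) = ∑ l ∈ Icc 1 r, f l := by
  refine sum_bij' (fun i _ ↦ i + 1) (fun l hl ↦ ⟨l - 1, by grind⟩) ?_ ?_ ?_ ?_ ?_ <;> grind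

end Guttman

lemma logistic_pos (x : ℝ) : 0 < logistic x := by
  unfold logistic
  positivity

lemma one_sub_logistic (x : ℝ) : 1 - logistic x = (1 + Real.exp x)⁻¹ := by
  have : 1 + Real.exp x ≠ 0 := by positivity
  rw [logistic]
  field_simp
  ring

lemma one_sub_logistic_pos (x : ℝ) : 0 < 1 - logistic x := by
  rw [one_sub_logistic]
  positivity

lemma logistic_eq_one_sub_logistic_mul_exp (x : ℝ) :
    logistic x = (1 - logistic x) * Real.exp x := by
  rw [one_sub_logistic, logistic, div_eq_inv_mul]

section ProdBer

variable {k r : ℕ} (θ : ℝ) (δ : ℕ → ℝ)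

lemma prodBer_pos (y : Fin k → Bool) : 0 < prodBer k θ δ y := by
  refine prod_pos fun i _ ↦ ?_
  split_ifs
  exacts [logistic_pos _, one_sub_logistic_pos _]

lemma prodBer_eq_prodBer_false_mul_exp (y : Fin k → Bool) :
    prodBer k θ δ y =
      prodBer k θ δ (fun _ ↦ false) * Real.exp (∑ i with y i = true, (θ - δ (i.val + 1))) := by
  rw [Real.exp_sum, prod_filter, prodBer, prodBer, ← prod_mul_distrib]
  refine prod_congr rfl fun i _ ↦ ?_
  simp only [Bool.false_eq_true, if_false]
  split_ifs
  · exact logistic_eq_one_sub_logistic_mul_exp _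
  · exact (mul_one _).symm

lemma prodBer_guttmanVec (hr : r ≤ k) :
    prodBer k θ δ (guttmanVec k r) =
      prodBer k θ δ (fun _ ↦ false) * Real.exp (∑ l ∈ Icc 1 r, (θ - δ l)) := by
  rw [prodBer_eq_prodBer_false_mul_exp, ← sum_fin_val_lt_eq_sum_Icc_one (fun l ↦ θ - δ l) hr]
  simp only [guttmanVec, decide_eq_true_eq]

lemma sum_isGuttman_prodBer (k : ℕ) :
    ∑ y with IsGuttman y, prodBer k θ δ y =
      prodBer k θ δ (fun _ ↦ false) *
        ∑ s ∈ range (k + 1), Real.exp (∑ l ∈ Icc 1 s, (θ - δ l)) := by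
  rw [sum_isGuttman, mul_sum]
  exact sum_congr rfl fun s hs ↦ prodBer_guttmanVec θ δ (mem_range_succ_iff.mp hs)

end ProdBer

/-- Proposition 4.1: the Guttman space has positive probability under
the product of independent Bernoullis with success probabilities `F(θ - δ r)`, and
after conditioning on the Guttman space the coordinate sum `Y` follows the partial
credit model with parameters `θ, δ 1, …, δ k`. -/
theorem pcm_from_independent_bernoullis_conditioned_on_guttman
    (k : ℕ) (θ : ℝ) (δ : ℕ → ℝ) :
    0 < (∑ y ∈ Finset.univ.filter (fun y : Fin k → Bool => IsGuttman y),
          prodBer k θ δ y) ∧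
    ∀ r ≤ k,
      (∑ y ∈ Finset.univ.filter (fun y : Fin k → Bool => IsGuttman y ∧ gsum y = r),
          prodBer k θ δ y) /
        (∑ y ∈ Finset.univ.filter (fun y : Fin k → Bool => IsGuttman y),
          prodBer k θ δ y)
        = pcmPMF k θ δ r := by
  constructor
  · exact sum_pos (fun y _ ↦ prodBer_pos θ δ y)
      ⟨guttmanVec k 0, (mem_filter_univ _).mpr (isGuttman_guttmanVec k 0)⟩
  · intro r hr
    rw [sum_isGuttman_and_gsum_eq _ hr, prodBer_guttmanVec θ δ hr, sum_isGuttman_prodBer,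
      mul_div_mul_left _ _ (prodBer_pos θ δ _).ne', pcmPMF]
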